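/- arXiv:1702.03829 — 2 statements merged into one kernel-verified Lean document; each statement's English description precedes it below -/
import Mathlib

section
/- Let y : ℝ → ℝ be twice differentiable, let φ, ψ : ℝ × ℝ → ℝ be twice continuously differentiable, define t : ℝ → ℝ by t(x) = ψ(x, y(x)), and let u : ℝ → ℝ be twice differentiable. Suppose that u(t(x)) = φ(x, y(x)) for all x in a neighborhood of x₀, and that D := ψ_x + ψ_y · y′(x₀) ≠ 0 at (x₀, y(x₀)). Then u″(t(x₀)) = [−J · y″(x₀) + (ψ_x + ψ_y y′)·(φ_{xx} + 2φ_{xy} y′ + φ_{yy} (y′)²) − (φ_x + φ_y y′)·(ψ_{xx} + 2ψ_{xy} y′ + ψ_{yy} (y′)²)] / D³, where J = φ_x ψ_y − φ_y ψ_x, y′ = y′(x₀), and all partial derivatives of φ and ψ are evaluated at (x₀, y(x₀)). -/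
/-!
Along the curve the new variables `t = ψ(x, y(x))` and `u = φ(x, y(x))` are functions of `x`.
Differentiating `u(t(x))` twice gives `u′ t′` and `u″ t′² + u′ t″`, so `u″` is recovered from the
`x`-derivatives by the parametric formula `u″ = (t′ φ″ − φ′ t″) / t′³`. The terms in `y″` of
`φ″` and `ψ″` are `φ_y y″` and `ψ_y y″`; in the numerator they combine to
`((ψ_x + ψ_y y′) φ_y − (φ_x + φ_y y′) ψ_y) y″ = −J y″`, the `y′` contributions cancelling.
-/

/-- First-order partial (directional) derivative of `f : ℝ × ℝ → ℝ` at `p`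
in the direction `v`. -/
noncomputable def pderiv₁ (f : ℝ × ℝ → ℝ) (v p : ℝ × ℝ) : ℝ :=
  fderiv ℝ f p v

/-- Second-order partial derivative of `f : ℝ × ℝ → ℝ` at `p`: first in the
direction `v`, then in the direction `w`. -/
noncomputable def pderiv₂ (f : ℝ × ℝ → ℝ) (v w p : ℝ × ℝ) : ℝ :=
  fderiv ℝ (fun q => fderiv ℝ f q v) p w

open Topology

section TwiceDifferentiable

variable {𝕜 E F G : Type*} [NontriviallyNormedField 𝕜]
  [NormedAddCommGroup E] [NormedSpace 𝕜 E] [NormedAddCommGroup F] [NormedSpace 𝕜 F]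
  [NormedAddCommGroup G] [NormedSpace 𝕜 G]

/-- Twice Fréchet differentiability at a point, the second derivative not being required to be
continuous or to exist elsewhere. Differentiability near `x` is demanded separately because
`fderiv` is `0` where `f` is not differentiable. -/
def TwiceDifferentiableAt (𝕜 : Type*) {E F : Type*} [NontriviallyNormedField 𝕜]
    [NormedAddCommGroup E] [NormedSpace 𝕜 E] [NormedAddCommGroup F] [NormedSpace 𝕜 F]
    (f : E → F) (x : E) : Prop :=
  (∀ᶠ z in 𝓝 x, DifferentiableAt 𝕜 f z) ∧ DifferentiableAt 𝕜 (fderiv 𝕜 f) x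

theorem twiceDifferentiableAt_iff_deriv {f : 𝕜 → F} {x : 𝕜} :
    TwiceDifferentiableAt 𝕜 f x ↔
      (∀ᶠ z in 𝓝 x, DifferentiableAt 𝕜 f z) ∧ DifferentiableAt 𝕜 (deriv f) x := by
  have fderiv_eq : fderiv 𝕜 f = ContinuousLinearMap.toSpanSingletonCLE ∘ deriv f :=
    funext fun _ => toSpanSingleton_deriv.symm
  rw [TwiceDifferentiableAt, fderiv_eq, ContinuousLinearEquiv.comp_differentiableAt_iff]

namespace TwiceDifferentiableAt

theorem of_contDiffAt {f : E → F} {x : E} (hf : ContDiffAt 𝕜 2 f x) :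
    TwiceDifferentiableAt 𝕜 f x :=
  ⟨(hf.eventually (by simp)).mono fun _ hz => hz.differentiableAt two_ne_zero,
    (hf.fderiv_right (m := 1) (by norm_num)).differentiableAt one_ne_zero⟩

theorem differentiableAt {f : E → F} {x : E} (hf : TwiceDifferentiableAt 𝕜 f x) :
    DifferentiableAt 𝕜 f x :=
  hf.1.self_of_nhds

theorem differentiableAt_deriv {f : 𝕜 → F} {x : 𝕜} (hf : TwiceDifferentiableAt 𝕜 f x) :
    DifferentiableAt 𝕜 (deriv f) x :=
  (twiceDifferentiableAt_iff_deriv.1 hf).2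

theorem eventually_differentiableAt_comp {f : E → F} {g : G → E} {x : G}
    (hf : TwiceDifferentiableAt 𝕜 f (g x)) (hg : TwiceDifferentiableAt 𝕜 g x) :
    ∀ᶠ z in 𝓝 x, DifferentiableAt 𝕜 f (g z) ∧ DifferentiableAt 𝕜 g z :=
  (hg.differentiableAt.continuousAt.eventually hf.1).and hg.1

theorem comp {f : E → F} {g : G → E} {x : G}
    (hf : TwiceDifferentiableAt 𝕜 f (g x)) (hg : TwiceDifferentiableAt 𝕜 g x) :
    TwiceDifferentiableAt 𝕜 (f ∘ g) x := by
  have near := hf.eventually_differentiableAt_comp hg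
  have fderiv_eq : fderiv 𝕜 (f ∘ g) =ᶠ[𝓝 x] fun z => (fderiv 𝕜 f (g z)).comp (fderiv 𝕜 g z) :=
    near.mono fun z hz => fderiv_comp z hz.1 hz.2
  refine ⟨near.mono fun z hz => hz.1.comp z hz.2, ?_⟩
  exact ((hf.2.comp x hg.differentiableAt).clm_comp hg.2).congr_of_eventuallyEq fderiv_eq

theorem deriv_deriv_comp {f : E → F} {γ : 𝕜 → E} {x : 𝕜}
    (hf : TwiceDifferentiableAt 𝕜 f (γ x)) (hγ : TwiceDifferentiableAt 𝕜 γ x) :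
    deriv (deriv (f ∘ γ)) x =
      fderiv 𝕜 (fderiv 𝕜 f) (γ x) (deriv γ x) (deriv γ x)
        + fderiv 𝕜 f (γ x) (deriv (deriv γ) x) := by
  have deriv_eq : deriv (f ∘ γ) =ᶠ[𝓝 x] fun z => fderiv 𝕜 f (γ z) (deriv γ z) :=
    (hf.eventually_differentiableAt_comp hγ).mono fun z hz => fderiv_comp_deriv z hz.1 hz.2
  have hasDerivAt_fderiv : HasDerivAt (fun z => fderiv 𝕜 f (γ z))
      (fderiv 𝕜 (fderiv 𝕜 f) (γ x) (deriv γ x)) x :=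
    hf.2.hasFDerivAt.comp_hasDerivAt x hγ.differentiableAt.hasDerivAt
  rw [deriv_eq.deriv_eq]
  exact (hasDerivAt_fderiv.clm_apply hγ.differentiableAt_deriv.hasDerivAt).deriv

theorem deriv_deriv_scomp {u : 𝕜 → F} {t : 𝕜 → 𝕜} {x : 𝕜}
    (hu : TwiceDifferentiableAt 𝕜 u (t x)) (ht : TwiceDifferentiableAt 𝕜 t x) :
    deriv (deriv (u ∘ t)) x =
      deriv t x ^ 2 • deriv (deriv u) (t x) + deriv (deriv t) x • deriv u (t x) := by
  have deriv_eq : deriv (u ∘ t) =ᶠ[𝓝 x] fun z => deriv t z • deriv u (t z) :=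
    (hu.eventually_differentiableAt_comp ht).mono fun z hz => deriv.scomp z hz.1 hz.2
  have hasDerivAt_deriv : HasDerivAt (fun z => deriv u (t z))
      (deriv t x • deriv (deriv u) (t x)) x :=
    hu.differentiableAt_deriv.hasDerivAt.scomp x ht.differentiableAt.hasDerivAt
  rw [deriv_eq.deriv_eq, (ht.differentiableAt_deriv.hasDerivAt.fun_smul hasDerivAt_deriv).deriv,
    smul_smul, sq]

theorem deriv_deriv_of_comp_eventuallyEq {u f : 𝕜 → F} {t : 𝕜 → 𝕜} {x : 𝕜}
    (hu : TwiceDifferentiableAt 𝕜 u (t x)) (ht : TwiceDifferentiableAt 𝕜 t x)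
    (h : u ∘ t =ᶠ[𝓝 x] f) (ht' : deriv t x ≠ 0) :
    deriv (deriv u) (t x) =
      (deriv t x ^ 3)⁻¹ • (deriv t x • deriv (deriv f) x - deriv (deriv t) x • deriv f x) := by
  have deriv_eq : deriv f x = deriv t x • deriv u (t x) := by
    rw [← h.deriv_eq, deriv.scomp x hu.differentiableAt ht.differentiableAt]
  have deriv_deriv_eq : deriv (deriv f) x =
      deriv t x ^ 2 • deriv (deriv u) (t x) + deriv (deriv t) x • deriv u (t x) := by
    rw [← h.deriv.deriv_eq, hu.deriv_deriv_scomp ht]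
  rw [deriv_eq, deriv_deriv_eq, eq_inv_smul_iff₀ (pow_ne_zero 3 ht')]
  module

end TwiceDifferentiableAt

theorem hasDerivAt_graph {y : 𝕜 → F} {x : 𝕜} (hy : DifferentiableAt 𝕜 y x) :
    HasDerivAt (fun z => (z, y z)) (1, deriv y x) x :=
  (hasDerivAt_id x).prodMk hy.hasDerivAt

namespace TwiceDifferentiableAt

variable {y : 𝕜 → F} {x : 𝕜}

theorem hasDerivAt_deriv_graph (hy : TwiceDifferentiableAt 𝕜 y x) :
    HasDerivAt (deriv fun z => (z, y z)) (0, deriv (deriv y) x) x :=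
  ((hasDerivAt_const x 1).prodMk hy.differentiableAt_deriv.hasDerivAt).congr_of_eventuallyEq
    (hy.1.mono fun _ hz => (hasDerivAt_graph hz).deriv)

theorem graph (hy : TwiceDifferentiableAt 𝕜 y x) :
    TwiceDifferentiableAt 𝕜 (fun z => (z, y z)) x :=
  twiceDifferentiableAt_iff_deriv.2
    ⟨hy.1.mono fun _ hz => (hasDerivAt_graph hz).differentiableAt,
      hy.hasDerivAt_deriv_graph.differentiableAt⟩

theorem comp_graph {f : 𝕜 × F → G} (hf : TwiceDifferentiableAt 𝕜 f (x, y x))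
    (hy : TwiceDifferentiableAt 𝕜 y x) : TwiceDifferentiableAt 𝕜 (fun z => f (z, y z)) x :=
  hf.comp (g := fun z => (z, y z)) hy.graph

end TwiceDifferentiableAt

end TwiceDifferentiable

section PartialDerivatives

theorem fderiv_apply_eq_pderiv₁ (f : ℝ × ℝ → ℝ) (p : ℝ × ℝ) (a b : ℝ) :
    fderiv ℝ f p (a, b) = a * pderiv₁ f (1, 0) p + b * pderiv₁ f (0, 1) p := by
  have decomp : (a, b) = a • ((1 : ℝ), (0 : ℝ)) + b • ((0 : ℝ), (1 : ℝ)) := by simp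
  rw [decomp, map_add, map_smul, map_smul]
  rfl

variable {f : ℝ × ℝ → ℝ} {p : ℝ × ℝ}

theorem pderiv₂_eq_fderiv_fderiv (hf : DifferentiableAt ℝ (fderiv ℝ f) p) (v w : ℝ × ℝ) :
    pderiv₂ f v w p = fderiv ℝ (fderiv ℝ f) p w v := by
  simp [pderiv₂, fderiv_clm_apply hf (differentiableAt_const v)]

theorem TwiceDifferentiableAt.pderiv₂_comm (hf : TwiceDifferentiableAt ℝ f p) (v w : ℝ × ℝ) :
    pderiv₂ f v w p = pderiv₂ f w v p := by
  rw [pderiv₂_eq_fderiv_fderiv hf.2, pderiv₂_eq_fderiv_fderiv hf.2]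
  exact second_derivative_symmetric_of_eventually
    (hf.1.mono fun _ hz => hz.hasFDerivAt) hf.2.hasFDerivAt w v

theorem TwiceDifferentiableAt.fderiv_fderiv_apply_self (hf : TwiceDifferentiableAt ℝ f p)
    (a b : ℝ) :
    fderiv ℝ (fderiv ℝ f) p (a, b) (a, b) =
      a ^ 2 * pderiv₂ f (1, 0) (1, 0) p + 2 * (a * b) * pderiv₂ f (1, 0) (0, 1) p
        + b ^ 2 * pderiv₂ f (0, 1) (0, 1) p := by
  have decomp : (a, b) = a • ((1 : ℝ), (0 : ℝ)) + b • ((0 : ℝ), (1 : ℝ)) := by simp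
  have mixed := hf.pderiv₂_comm (0, 1) (1, 0)
  simp only [pderiv₂_eq_fderiv_fderiv hf.2] at mixed ⊢
  simp only [decomp, map_add, map_smul, add_apply, smul_apply, smul_eq_mul, mixed]
  ring

variable {y : ℝ → ℝ} {x : ℝ}

theorem deriv_comp_graph (hf : DifferentiableAt ℝ f (x, y x)) (hy : DifferentiableAt ℝ y x) :
    deriv (fun z => f (z, y z)) x =
      pderiv₁ f (1, 0) (x, y x) + pderiv₁ f (0, 1) (x, y x) * deriv y x := by
  have first_deriv : deriv (fun z => f (z, y z)) x = fderiv ℝ f (x, y x) (1, deriv y x) :=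
    (hf.hasFDerivAt.comp_hasDerivAt (f := fun z => (z, y z)) x (hasDerivAt_graph hy)).deriv
  rw [first_deriv, fderiv_apply_eq_pderiv₁]
  ring

theorem TwiceDifferentiableAt.deriv_deriv_comp_graph
    (hf : TwiceDifferentiableAt ℝ f (x, y x)) (hy : TwiceDifferentiableAt ℝ y x) :
    deriv (deriv fun z => f (z, y z)) x =
      pderiv₂ f (1, 0) (1, 0) (x, y x) + 2 * pderiv₂ f (1, 0) (0, 1) (x, y x) * deriv y x
        + pderiv₂ f (0, 1) (0, 1) (x, y x) * deriv y x ^ 2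
        + pderiv₁ f (0, 1) (x, y x) * deriv (deriv y) x := by
  have second_deriv : deriv (deriv fun z => f (z, y z)) x =
      fderiv ℝ (fderiv ℝ f) (x, y x) (1, deriv y x) (1, deriv y x)
        + fderiv ℝ f (x, y x) (0, deriv (deriv y) x) := by
    rw [← (hasDerivAt_graph hy.differentiableAt).deriv, ← hy.hasDerivAt_deriv_graph.deriv]
    exact hf.deriv_deriv_comp (γ := fun z => (z, y z)) hy.graph
  rw [second_deriv, hf.fderiv_fderiv_apply_self, fderiv_apply_eq_pderiv₁]
  ring

end PartialDerivatives

theorem second_order_point_transformation_general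
    {y : ℝ → ℝ} {φ ψ : ℝ × ℝ → ℝ} {t u : ℝ → ℝ} {x₀ : ℝ}
    (hy : TwiceDifferentiableAt ℝ y x₀)
    (hφ : TwiceDifferentiableAt ℝ φ (x₀, y x₀)) (hψ : TwiceDifferentiableAt ℝ ψ (x₀, y x₀))
    (ht : ∀ᶠ x in 𝓝 x₀, t x = ψ (x, y x)) (hu : TwiceDifferentiableAt ℝ u (t x₀))
    (huφ : ∀ᶠ x in 𝓝 x₀, u (t x) = φ (x, y x))
    (hD : pderiv₁ ψ (1, 0) (x₀, y x₀) + pderiv₁ ψ (0, 1) (x₀, y x₀) * deriv y x₀ ≠ 0) :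
    deriv (deriv u) (t x₀)
      = (-(pderiv₁ φ (1, 0) (x₀, y x₀) * pderiv₁ ψ (0, 1) (x₀, y x₀)
            - pderiv₁ φ (0, 1) (x₀, y x₀) * pderiv₁ ψ (1, 0) (x₀, y x₀))
            * deriv (deriv y) x₀
          + (pderiv₁ ψ (1, 0) (x₀, y x₀)
              + pderiv₁ ψ (0, 1) (x₀, y x₀) * deriv y x₀)
            * (pderiv₂ φ (1, 0) (1, 0) (x₀, y x₀)
                + 2 * pderiv₂ φ (1, 0) (0, 1) (x₀, y x₀) * deriv y x₀
                + pderiv₂ φ (0, 1) (0, 1) (x₀, y x₀) * (deriv y x₀) ^ 2)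
          - (pderiv₁ φ (1, 0) (x₀, y x₀)
              + pderiv₁ φ (0, 1) (x₀, y x₀) * deriv y x₀)
            * (pderiv₂ ψ (1, 0) (1, 0) (x₀, y x₀)
                + 2 * pderiv₂ ψ (1, 0) (0, 1) (x₀, y x₀) * deriv y x₀
                + pderiv₂ ψ (0, 1) (0, 1) (x₀, y x₀) * (deriv y x₀) ^ 2))
        / (pderiv₁ ψ (1, 0) (x₀, y x₀)
            + pderiv₁ ψ (0, 1) (x₀, y x₀) * deriv y x₀) ^ 3 := by
  have comp_eq : u ∘ (fun x => ψ (x, y x)) =ᶠ[𝓝 x₀] fun x => φ (x, y x) := by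
    filter_upwards [ht, huφ] with x htx hux
    rw [Function.comp_apply, ← htx, hux]
  have hDψ := deriv_comp_graph hψ.differentiableAt hy.differentiableAt
  rw [ht.self_of_nhds] at hu ⊢
  rw [hu.deriv_deriv_of_comp_eventuallyEq (hψ.comp_graph hy) comp_eq (hDψ.trans_ne hD), hDψ,
    deriv_comp_graph hφ.differentiableAt hy.differentiableAt,
    hφ.deriv_deriv_comp_graph hy, hψ.deriv_deriv_comp_graph hy]
  simp only [smul_eq_mul]
  ring

/-- Second-order transformation formula under the point transformation
`u = φ(x, y)`, `t = ψ(x, y)` along a curve `y = y(x)`: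
`u″(t(x₀)) = [−J y″ + (ψ_x + ψ_y y′)(φ_xx + 2φ_xy y′ + φ_yy y′²)
  − (φ_x + φ_y y′)(ψ_xx + 2ψ_xy y′ + ψ_yy y′²)] / D³`,
where `D = ψ_x + ψ_y y′ ≠ 0` and `J = φ_x ψ_y − φ_y ψ_x`. -/
theorem second_order_point_transformation
    (y : ℝ → ℝ) (hy : Differentiable ℝ y) (hy' : Differentiable ℝ (deriv y))
    (φ ψ : ℝ × ℝ → ℝ) (hφ : ContDiff ℝ 2 φ) (hψ : ContDiff ℝ 2 ψ)
    (t : ℝ → ℝ) (ht : ∀ x, t x = ψ (x, y x))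
    (u : ℝ → ℝ) (hu : Differentiable ℝ u) (hu' : Differentiable ℝ (deriv u))
    (x₀ : ℝ)
    (huφ : ∀ᶠ x in nhds x₀, u (t x) = φ (x, y x))
    (hD : pderiv₁ ψ (1, 0) (x₀, y x₀)
        + pderiv₁ ψ (0, 1) (x₀, y x₀) * deriv y x₀ ≠ 0) :
    deriv (deriv u) (t x₀)
      = (-(pderiv₁ φ (1, 0) (x₀, y x₀) * pderiv₁ ψ (0, 1) (x₀, y x₀)
            - pderiv₁ φ (0, 1) (x₀, y x₀) * pderiv₁ ψ (1, 0) (x₀, y x₀))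
            * deriv (deriv y) x₀
          + (pderiv₁ ψ (1, 0) (x₀, y x₀)
              + pderiv₁ ψ (0, 1) (x₀, y x₀) * deriv y x₀)
            * (pderiv₂ φ (1, 0) (1, 0) (x₀, y x₀)
                + 2 * pderiv₂ φ (1, 0) (0, 1) (x₀, y x₀) * deriv y x₀
                + pderiv₂ φ (0, 1) (0, 1) (x₀, y x₀) * (deriv y x₀) ^ 2)
          - (pderiv₁ φ (1, 0) (x₀, y x₀)
              + pderiv₁ φ (0, 1) (x₀, y x₀) * deriv y x₀)
            * (pderiv₂ ψ (1, 0) (1, 0) (x₀, y x₀)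
                + 2 * pderiv₂ ψ (1, 0) (0, 1) (x₀, y x₀) * deriv y x₀
                + pderiv₂ ψ (0, 1) (0, 1) (x₀, y x₀) * (deriv y x₀) ^ 2))
        / (pderiv₁ ψ (1, 0) (x₀, y x₀)
            + pderiv₁ ψ (0, 1) (x₀, y x₀) * deriv y x₀) ^ 3 :=
  second_order_point_transformation_general
    (twiceDifferentiableAt_iff_deriv.2 ⟨.of_forall hy, hy' x₀⟩)
    (.of_contDiffAt hφ.contDiffAt) (.of_contDiffAt hψ.contDiffAt) (.of_forall ht)
    (twiceDifferentiableAt_iff_deriv.2 ⟨.of_forall hu, hu' (t x₀)⟩) huφ hD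
end

section
/- Let y : ℝ → ℝ be three times differentiable with y(x) ≠ 0 for all x ∈ ℝ, and suppose y satisfies the nonlinear third-order ODE y‴(x) + (3 y′(x)/y(x))·(y″(x) − y′(x)) − 3 y″(x) + 2 y′(x) − y(x) = 0 for all x ∈ ℝ. Define u : (0, ∞) → ℝ by u(t) = (y(log t))². Then u is three times differentiable on (0, ∞) and satisfies the linear ODE u‴(t) − 2 u(t)/t³ = 0 for all t > 0. -/
/-!
With `t = exp x` we have `t · d/dt = d/dx`, so for `u (exp x) = w x` the third derivative satisfies
`t³ u‴ = w‴ - 3 w″ + 2 w′`: the equation `u‴ = 2u/t³` is an Euler equation, and becomes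
`w‴ - 3 w″ + 2 w′ = 2 w` in the variable `x`. Substituting `w = y²` and dividing by `2y` gives the
nonlinear equation for `y`.
-/

open Real Topology

section EulerSubstitution

variable {E : Type*} [NormedAddCommGroup E] [NormedSpace ℝ E]

theorem hasDerivAt_of_comp_exp {v : ℝ → E} {v' : E} {x : ℝ}
    (h : HasDerivAt (fun z => v (exp z)) v' x) :
    HasDerivAt v ((exp x)⁻¹ • v') (exp x) := by
  have hlog : HasDerivAt log (exp x)⁻¹ (exp x) := hasDerivAt_log (exp_ne_zero x)
  rw [← log_exp x] at h
  refine (h.scomp (exp x) hlog).congr_of_eventuallyEq ?_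
  filter_upwards [Ioi_mem_nhds (exp_pos x)] with t ht
  rw [Function.comp_apply, exp_log ht]

theorem hasDerivAt_inv_exp_pow (n : ℕ) (x : ℝ) :
    HasDerivAt (fun z => (exp z ^ n)⁻¹) (-n * (exp x ^ n)⁻¹) x := by
  have h : HasDerivAt (fun z => exp (-(n * z))) (exp (-(n * x)) * -(n * 1)) x :=
    ((hasDerivAt_id x).const_mul (n : ℝ)).neg.exp
  simp only [exp_neg, exp_nat_mul] at h
  exact h.congr_deriv (by ring)

theorem hasDerivAt_of_comp_exp_eq_inv_pow_smul {v f : ℝ → E} {f' : E} {x : ℝ} (n : ℕ)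
    (hv : ∀ᶠ z in 𝓝 x, v (exp z) = (exp z ^ n)⁻¹ • f z) (hf : HasDerivAt f f' x) :
    HasDerivAt v ((exp x ^ (n + 1))⁻¹ • (f' - n • f x)) (exp x) := by
  have h := ((hasDerivAt_inv_exp_pow n x).smul hf).congr_of_eventuallyEq hv
  refine (hasDerivAt_of_comp_exp h).congr_deriv ?_
  rw [pow_succ, mul_inv]
  module

variable {s : Set ℝ} {u w w₁ w₂ w₃ : ℝ → E} {x : ℝ}

theorem hasDerivAt_of_comp_exp_eqOn (hs : IsOpen s) (hu : ∀ x ∈ s, u (exp x) = w x)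
    (hw : ∀ x ∈ s, HasDerivAt w (w₁ x) x) (hx : x ∈ s) :
    HasDerivAt u ((exp x)⁻¹ • w₁ x) (exp x) :=
  hasDerivAt_of_comp_exp <| (hw x hx).congr_of_eventuallyEq <| by
    filter_upwards [hs.mem_nhds hx] using hu

theorem hasDerivAt_deriv_of_comp_exp_eqOn (hs : IsOpen s) (hu : ∀ x ∈ s, u (exp x) = w x)
    (hw : ∀ x ∈ s, HasDerivAt w (w₁ x) x) (hw₁ : ∀ x ∈ s, HasDerivAt w₁ (w₂ x) x) (hx : x ∈ s) :
    HasDerivAt (deriv u) ((exp x ^ 2)⁻¹ • (w₂ x - w₁ x)) (exp x) := by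
  have hu' : ∀ᶠ z in 𝓝 x, deriv u (exp z) = (exp z ^ 1)⁻¹ • w₁ z := by
    filter_upwards [hs.mem_nhds hx] with z hz
    rw [pow_one, (hasDerivAt_of_comp_exp_eqOn hs hu hw hz).deriv]
  simpa using hasDerivAt_of_comp_exp_eq_inv_pow_smul 1 hu' (hw₁ x hx)

theorem hasDerivAt_deriv_deriv_of_comp_exp_eqOn (hs : IsOpen s)
    (hu : ∀ x ∈ s, u (exp x) = w x) (hw : ∀ x ∈ s, HasDerivAt w (w₁ x) x)
    (hw₁ : ∀ x ∈ s, HasDerivAt w₁ (w₂ x) x) (hw₂ : ∀ x ∈ s, HasDerivAt w₂ (w₃ x) x)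
    (hx : x ∈ s) :
    HasDerivAt (deriv (deriv u)) ((exp x ^ 3)⁻¹ • (w₃ x - 3 • w₂ x + 2 • w₁ x)) (exp x) := by
  have hu'' : ∀ᶠ z in 𝓝 x, deriv (deriv u) (exp z) = (exp z ^ 2)⁻¹ • (w₂ z - w₁ z) := by
    filter_upwards [hs.mem_nhds hx] with z hz
    exact (hasDerivAt_deriv_of_comp_exp_eqOn hs hu hw hw₁ hz).deriv
  refine (hasDerivAt_of_comp_exp_eq_inv_pow_smul 2 hu''
    ((hw₂ x hx).fun_sub (hw₁ x hx))).congr_deriv ?_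
  congr 1
  module

end EulerSubstitution

section Square

variable {A : Type*} [NormedCommRing A] [NormedAlgebra ℝ A] {y y₁ y₂ : ℝ → A} {b c : A} {x : ℝ}

theorem hasDerivAt_sq (hy : HasDerivAt y b x) :
    HasDerivAt (fun z => y z ^ 2) (2 * (y x * b)) x :=
  (hy.fun_pow 2).congr_deriv (by push_cast; ring)

theorem hasDerivAt_two_mul_mul (hy : HasDerivAt y (y₁ x) x) (hy₁ : HasDerivAt y₁ c x) :
    HasDerivAt (fun z => 2 * (y z * y₁ z)) (2 * (y₁ x ^ 2 + y x * c)) x :=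
  ((hy.fun_mul hy₁).const_mul 2).congr_deriv (by ring)

theorem hasDerivAt_two_mul_sq_add_mul (hy : HasDerivAt y (y₁ x) x) (hy₁ : HasDerivAt y₁ (y₂ x) x)
    (hy₂ : HasDerivAt y₂ c x) :
    HasDerivAt (fun z => 2 * (y₁ z ^ 2 + y z * y₂ z)) (2 * (3 * (y₁ x * y₂ x) + y x * c)) x :=
  (((hasDerivAt_sq hy₁).fun_add (hy.fun_mul hy₂)).const_mul 2).congr_deriv (by ring)

end Square

theorem euler_eq_of_nonlinear_eq {K : Type*} [Field K] {a b c d : K} (ha : a ≠ 0)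
    (h : d + (3 * b / a) * (c - b) - 3 * c + 2 * b - a = 0) :
    2 * (3 * (b * c) + a * d) - 3 * (2 * (b ^ 2 + a * c)) + 2 * (2 * (a * b)) = 2 * a ^ 2 := by
  field_simp at h
  linear_combination 2 * h

theorem linearization_of_third_order_ode_general {𝕜 : Type*} [NormedField 𝕜] [NormedAlgebra ℝ 𝕜]
    {s : Set ℝ} (hs : IsOpen s) {y : ℝ → 𝕜} (hy : DifferentiableOn ℝ y s)
    (hy' : DifferentiableOn ℝ (deriv y) s) (hy'' : DifferentiableOn ℝ (deriv (deriv y)) s)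
    (hy0 : ∀ x ∈ s, y x ≠ 0)
    (hode : ∀ x ∈ s,
      deriv (deriv (deriv y)) x
        + (3 * deriv y x / y x) * (deriv (deriv y) x - deriv y x)
        - 3 * deriv (deriv y) x + 2 * deriv y x - y x = 0)
    {u : ℝ → 𝕜} (hu : ∀ x ∈ s, u (exp x) = y x ^ 2) :
    (∀ t ∈ exp '' s,
        DifferentiableAt ℝ u t ∧ DifferentiableAt ℝ (deriv u) t
          ∧ DifferentiableAt ℝ (deriv (deriv u)) t)
      ∧ ∀ t ∈ exp '' s, deriv (deriv (deriv u)) t - (2 / t ^ 3) • u t = 0 := by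
  have hy₁ (x) (hx : x ∈ s) := hy.hasDerivAt (hs.mem_nhds hx)
  have hy₂ (x) (hx : x ∈ s) := hy'.hasDerivAt (hs.mem_nhds hx)
  have hy₃ (x) (hx : x ∈ s) := hy''.hasDerivAt (hs.mem_nhds hx)
  have hw (x) (hx : x ∈ s) := hasDerivAt_sq (hy₁ x hx)
  have hw₁ (x) (hx : x ∈ s) := hasDerivAt_two_mul_mul (hy₁ x hx) (hy₂ x hx)
  have hw₂ (x) (hx : x ∈ s) := hasDerivAt_two_mul_sq_add_mul (hy₁ x hx) (hy₂ x hx) (hy₃ x hx)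
  constructor <;> rintro _ ⟨x, hx, rfl⟩
  · exact ⟨(hasDerivAt_of_comp_exp_eqOn hs hu hw hx).differentiableAt,
      (hasDerivAt_deriv_of_comp_exp_eqOn hs hu hw hw₁ hx).differentiableAt,
      (hasDerivAt_deriv_deriv_of_comp_exp_eqOn hs hu hw hw₁ hw₂ hx).differentiableAt⟩
  · have heuler := euler_eq_of_nonlinear_eq (hy0 x hx) (hode x hx)
    rw [(hasDerivAt_deriv_deriv_of_comp_exp_eqOn hs hu hw hw₁ hw₂ hx).deriv, hu x hx]
    simp only [nsmul_eq_mul, Nat.cast_ofNat]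
    rw [heuler, div_eq_inv_mul, mul_smul, ofNat_smul_eq_nsmul, nsmul_eq_mul, Nat.cast_ofNat,
      sub_self]

/-- The point transformation `t = exp x`, `u = y²` maps every nowhere-vanishing
three times differentiable solution of the nonlinear third-order ODE
`y‴ + (3y′/y)(y″ − y′) − 3y″ + 2y′ − y = 0` to a solution of the linear ODE
`u‴ − 2u/t³ = 0` on `(0, ∞)`; moreover `u(t) = (y (log t))²` is three times
differentiable on `(0, ∞)`. -/
theorem linearization_of_third_order_ode
    (y : ℝ → ℝ)
    (hy : Differentiable ℝ y)
    (hy' : Differentiable ℝ (deriv y))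
    (hy'' : Differentiable ℝ (deriv (deriv y)))
    (hy0 : ∀ x : ℝ, y x ≠ 0)
    (hode : ∀ x : ℝ,
      deriv (deriv (deriv y)) x
        + (3 * deriv y x / y x) * (deriv (deriv y) x - deriv y x)
        - 3 * deriv (deriv y) x + 2 * deriv y x - y x = 0)
    (u : ℝ → ℝ) (hu : ∀ t : ℝ, u t = (y (Real.log t)) ^ 2) :
    (∀ t ∈ Set.Ioi (0 : ℝ),
        DifferentiableAt ℝ u t ∧ DifferentiableAt ℝ (deriv u) t
          ∧ DifferentiableAt ℝ (deriv (deriv u)) t)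
      ∧ ∀ t ∈ Set.Ioi (0 : ℝ),
          deriv (deriv (deriv u)) t - 2 * u t / t ^ 3 = 0 := by
  simpa [div_mul_eq_mul_div] using linearization_of_third_order_ode_general isOpen_univ
    hy.differentiableOn hy'.differentiableOn hy''.differentiableOn (fun x _ => hy0 x)
    (fun x _ => hode x) (u := u) (fun x _ => by rw [hu, log_exp])
end
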